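/- arXiv:1306.4913 — 2 statements merged into one kernel-verified Lean document; each statement's English description precedes it below -/
import Mathlib

section
/- Let G be a finite group, H a subgroup of G, and g an element of G. The number of left cosets xH of H in G such that g • (xH) = xH equals (|G| · |{h ∈ H : h is conjugate to g in G}|) / (|H| · |{y ∈ G : y is conjugate to g in G}|). -/
/-!
Both sides come from counting `T = {x : G | x⁻¹ * g * x ∈ H}` in two ways. The set `T` is the union
of the left cosets of `H` fixed by `g`, so `|T| = |H| * #fixed`. On the other hand, `x ↦ x⁻¹ * g * x`
maps `T` onto the conjugates of `g` lying in `H`, and each fibre is a coset of the centralizer `C` of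
`g`, so `|T| = |C| * #{h ∈ H | h conjugate to g}`. The same fibre count on all of `G`
reads `|G| = |C| * #{conjugates of g}`; eliminating `|C|` gives the formula.
-/

/-- The fibres of `x ↦ x⁻¹ * g * x` over the conjugates of `g` are cosets of the centralizer. -/
theorem card_conj_mem_eq {G : Type*} [Group G] (g : G) (S : Set G) :
    Nat.card {x : G // x⁻¹ * g * x ∈ S} =
      Nat.card {c : G // c * g = g * c} * Nat.card {y : G // y ∈ S ∧ IsConj g y} := by
  have hr : ∀ y : G, ∃ r : G, IsConj g y → r⁻¹ * g * r = y := by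
    intro y
    by_cases h : IsConj g y
    · obtain ⟨c, hc⟩ := isConj_iff.1 h
      exact ⟨c⁻¹, fun _ => by simpa using hc⟩
    · exact ⟨1, fun h' => absurd h' h⟩
  choose r hr using hr
  have hconj : ∀ x : G, IsConj g (x⁻¹ * g * x) := fun x =>
    isConj_iff.2 ⟨x⁻¹, by simp⟩
  have hmul : ∀ c y : G, c * g = g * c → IsConj g y → (c * r y)⁻¹ * g * (c * r y) = y := by
    intro c y hc hy
    calc (c * r y)⁻¹ * g * (c * r y) = (r y)⁻¹ * c⁻¹ * (g * c) * r y := by group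
      _ = (r y)⁻¹ * g * r y := by rw [← hc]; group
      _ = y := hr y hy
  rw [← Nat.card_prod]
  refine Nat.card_congr
    { toFun := fun x => (⟨x.1 * (r (x.1⁻¹ * g * x.1))⁻¹, ?_⟩, ⟨x.1⁻¹ * g * x.1, x.2, hconj _⟩)
      invFun := fun p => ⟨p.1.1 * r p.2.1, ?_⟩
      left_inv := ?_
      right_inv := ?_ }
  · have h := hr _ (hconj x.1)
    generalize r (x.1⁻¹ * g * x.1) = s at h ⊢
    have h2 : g * s = s * (x.1⁻¹ * g * x.1) := by rw [← h]; group
    calc x.1 * s⁻¹ * g = x.1 * s⁻¹ * (g * s) * s⁻¹ := by group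
      _ = g * (x.1 * s⁻¹) := by rw [h2]; group
  · rw [hmul _ _ p.1.2 p.2.2.2]
    exact p.2.2.1
  · intro x
    simp
  · rintro ⟨⟨c, hc⟩, ⟨y, hyS, hy⟩⟩
    have := hmul c y hc hy
    simp only [Prod.mk.injEq, Subtype.mk.injEq]
    rw [this]
    simp

theorem frobenius_fixed_cosets (G : Type*) [Group G] [Finite G] (H : Subgroup G) (g : G) :
    Nat.card {x : G ⧸ H // g • x = x} =
      (Nat.card G * Nat.card {h : H // IsConj g (h : G)}) /
        (Nat.card H * Nat.card {y : G // IsConj g y}) := by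
  have hT : Nat.card {x : G // x⁻¹ * g * x ∈ (H : Set G)} =
      Nat.card H * Nat.card {x : G ⧸ H // g • x = x} := by
    rw [← Nat.card_prod]
    refine Nat.card_congr ((Equiv.subtypeEquivRight fun x => ?_).trans
      (QuotientGroup.preimageMkEquivSubgroupProdSet H {x : G ⧸ H | g • x = x}))
    change _ ↔ ((g * x : G) : G ⧸ H) = (x : G ⧸ H)
    rw [eq_comm, QuotientGroup.eq, mul_assoc]
    rfl
  have hH : Nat.card {y : G // y ∈ (H : Set G) ∧ IsConj g y} =
      Nat.card {h : H // IsConj g (h : G)} :=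
    Nat.card_congr (Equiv.subtypeSubtypeEquivSubtypeInter (· ∈ H) (IsConj g)).symm
  have h1 := card_conj_mem_eq g (H : Set G)
  have h2 : Nat.card G = Nat.card {c : G // c * g = g * c} * Nat.card {y : G // IsConj g y} := by
    have h := card_conj_mem_eq g Set.univ
    simp only [Set.mem_univ, true_and] at h
    rw [← h]
    exact Nat.card_congr (Equiv.subtypeUnivEquiv fun _ => trivial).symm
  rw [hT, hH] at h1
  have : Nonempty {y : G // IsConj g y} := ⟨⟨g, IsConj.refl g⟩⟩
  symm
  apply Nat.div_eq_of_eq_mul_right (Nat.mul_pos Nat.card_pos Nat.card_pos)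
  rw [h2, mul_right_comm, ← h1]
  ring
end

section
/- Let n and k be natural numbers with k ≤ n, and let σ be a permutation of Fin n. Then the number of k-element subsets A of Fin n with σ '' A = A equals (n! · |{τ : a permutation of Fin n | τ '' {0,…,k−1} = {0,…,k−1} and τ is conjugate to σ}|) / (k! · (n−k)! · |{τ : a permutation of Fin n | τ is conjugate to σ}|). -/
/-!
Count in two ways the pairs `(τ, A)` with `τ` conjugate to `σ`, `A` a `k`-element subset and
`τ '' A = A`. Conjugating `τ` to `σ` shows that each `τ` fixes as many `k`-subsets as `σ` does;
moving `A` onto `{0, …, k-1}` by a permutation shows that each `A` is fixed by as many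
conjugates of `σ` as `{0, …, k-1}` is (`card_fixed_eq_of_isConj`, `card_fixing_eq_of_image`).
Hence `|class| * |fixed subsets| = n.choose k * |class ∩ Young subgroup|`, and multiplying by
`k! (n - k)!` shows in particular that the division in the statement is exact.
-/

theorem card_fixed_eq_of_isConj {α : Type*} {σ τ : Equiv.Perm α} (k : ℕ) (h : IsConj τ σ) :
    Nat.card {A : Set α // A.ncard = k ∧ τ '' A = A} =
      Nat.card {A : Set α // A.ncard = k ∧ σ '' A = A} := by
  obtain ⟨g, rfl⟩ := isConj_iff.1 h
  refine Nat.card_congr ((Equiv.Set.congr g).subtypeEquiv fun A => ?_)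
  have h1 : (Equiv.Set.congr g A).ncard = A.ncard := Set.ncard_image_of_injective A g.injective
  have h2 : (g * τ * g⁻¹ : Equiv.Perm α) '' (Equiv.Set.congr g A) = g '' (τ '' A) := by
    simp [Set.image_image]
  rw [h1, h2]
  exact and_congr_right fun _ => (Set.image_injective.2 g.injective).eq_iff.symm

theorem card_fixing_eq_of_image {α : Type*} (σ g : Equiv.Perm α) (S : Set α) :
    Nat.card {τ : Equiv.Perm α // τ '' (g '' S) = g '' S ∧ IsConj τ σ} =
      Nat.card {τ : Equiv.Perm α // τ '' S = S ∧ IsConj τ σ} := by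
  refine (Nat.card_congr ((MulAut.conj g).toEquiv.subtypeEquiv fun τ => ?_)).symm
  have h1 : (MulAut.conj g τ : Equiv.Perm α) '' (g '' S) = g '' (τ '' S) := by
    simp [Set.image_image]
  have h2 : IsConj τ (MulAut.conj g τ) := isConj_iff.2 ⟨g, rfl⟩
  change _ ↔ (MulAut.conj g τ : Equiv.Perm α) '' (g '' S) = g '' S ∧ IsConj (MulAut.conj g τ) σ
  rw [h1, (Set.image_injective.2 g.injective).eq_iff]
  exact and_congr_right fun _ => ⟨h2.symm.trans, h2.trans⟩

theorem exists_perm_image_eq {α : Type*} [Finite α] {S A : Set α} (h : S.ncard = A.ncard) :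
    ∃ g : Equiv.Perm α, g '' S = A := by
  classical
  have := Fintype.ofFinite α
  let e : {x // x ∈ S} ≃ {x // x ∈ A} :=
    (Finite.card_eq.1 h).some
  refine ⟨e.extendSubtype, Set.eq_of_subset_of_ncard_le ?_ ?_⟩
  · rintro _ ⟨x, hx, rfl⟩
    exact e.extendSubtype_mem x hx
  · rw [Set.ncard_image_of_injective _ e.extendSubtype.injective, h]

theorem ncard_lt_fin {n k : ℕ} (hk : k ≤ n) : {x : Fin n | (x : ℕ) < k}.ncard = k := by
  rw [Set.ncard_eq_toFinset_card']
  simp [Fin.card_filter_val_lt, hk]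

theorem card_sets_ncard_eq (n k : ℕ) : Nat.card {A : Set (Fin n) // A.ncard = k} = n.choose k := by
  classical
  have e : {A : Finset (Fin n) // A ∈ Finset.powersetCard k Finset.univ} ≃
      {A : Set (Fin n) // A.ncard = k} :=
    Fintype.finsetEquivSet.subtypeEquiv fun A => by simp [Finset.mem_powersetCard]
  rw [← Nat.card_congr e]
  simp

theorem frobenius_induced_character_value (n k : ℕ) (hk : k ≤ n) (σ : Equiv.Perm (Fin n)) :
    Nat.card {A : Set (Fin n) // A.ncard = k ∧ σ '' A = A} =
      (n.factorial * Nat.card {τ : Equiv.Perm (Fin n) //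
          τ '' {x : Fin n | (x : ℕ) < k} = {x : Fin n | (x : ℕ) < k} ∧ IsConj τ σ}) /
        (k.factorial * (n - k).factorial *
          Nat.card {τ : Equiv.Perm (Fin n) // IsConj τ σ}) := by
  classical
  have key := Finset.card_mul_eq_card_mul (s := {τ : Equiv.Perm (Fin n) | IsConj τ σ})
    (t := {A : Set (Fin n) | A.ncard = k})
    (fun (τ : Equiv.Perm (Fin n)) (A : Set (Fin n)) => τ '' A = A)
    (m := Nat.card {A : Set (Fin n) // A.ncard = k ∧ σ '' A = A})
    (n := Nat.card {τ : Equiv.Perm (Fin n) //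
          τ '' {x : Fin n | (x : ℕ) < k} = {x : Fin n | (x : ℕ) < k} ∧ IsConj τ σ})
    (fun τ hτ => by
      rw [← card_fixed_eq_of_isConj k (Finset.mem_filter.1 hτ).2, Nat.card_eq_fintype_card,
        Fintype.card_subtype, Finset.bipartiteAbove, Finset.filter_filter])
    (fun A hA => by
      obtain ⟨g, rfl⟩ := exists_perm_image_eq
        ((ncard_lt_fin hk).trans (Finset.mem_filter.1 hA).2.symm)
      rw [← card_fixing_eq_of_image σ g, Nat.card_eq_fintype_card,
        Fintype.card_subtype, Finset.bipartiteBelow, Finset.filter_filter]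
      simp only [and_comm])
  rw [← Fintype.card_subtype, ← Fintype.card_subtype, ← Nat.card_eq_fintype_card,
    ← Nat.card_eq_fintype_card, card_sets_ncard_eq] at key
  have : Nonempty {τ : Equiv.Perm (Fin n) // IsConj τ σ} := ⟨⟨σ, IsConj.refl σ⟩⟩
  have hc : 0 < Nat.card {τ : Equiv.Perm (Fin n) // IsConj τ σ} := Nat.card_pos
  symm
  apply Nat.div_eq_of_eq_mul_right (by positivity)
  rw [mul_assoc, key, ← Nat.choose_mul_factorial_mul_factorial hk]
  ring
end
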